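/- Let a₀ be the unique solution in (0, 2π/13] of K_{a}((3,11,13)) = 0, i.e. a₀ = a_c((3,11,13)). Then the total area of the three faces of a vertex of pattern (3,11,13) at side length a₀ satisfies 0.08375 < (3·β(3,a₀) − π) + (11·β(11,a₀) − 9π) + (13·β(13,a₀) − 11π) < 0.08376. -/

import Mathlib

/-- The angle defect `K_a(p) = 2π − Σ_{f ∈ p} 2·arcsin(cos(π/f)/cos(a/2))` of a
vertex pattern given as a list. -/
noncomputable def K (p : List ℕ) (a : ℝ) : ℝ :=
  2 * Real.pi -
    (p.map (fun f => 2 * Real.arcsin (Real.cos (Real.pi / (f : ℝ)) / Real.cos (a / 2)))).sum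

/-- The critical side-length `a_c(p) = max{a ∈ [0, 2π/f_N] : K_a(p) ≥ 0}` of a
vertex pattern, where `f_N` is the last (largest) entry. -/
noncomputable def ac (p : List ℕ) : ℝ :=
  sSup {a : ℝ | a ∈ Set.Icc 0 (2 * Real.pi / (p.getLast! : ℝ)) ∧ 0 ≤ K p a}

/-- The interior angle of the regular spherical n-gon of side length a. -/
noncomputable def beta (n : ℕ) (a : ℝ) : ℝ :=
  2 * Real.arcsin (Real.cos (Real.pi / (n : ℝ)) / Real.cos (a / 2))

/-!
At the critical side-length the half-angles `β(p, a) / 2` of the three faces add up to `π`, and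
their sines are `cos (π / p) / cos (a / 2)`. They are therefore the angles of a *Euclidean* triangle
with sides proportional to `cos (π / p)`, and the law of cosines expresses them without `a`. The
total area becomes a linear combination of `π` and two explicit arccosines, which are bounded
through the alternating series of the cosine.
-/

section

open Real Set

theorem antitone_pow_div_factorial_of_sq_le_two {x : ℝ} (hx : x ^ 2 ≤ 2) :
    Antitone fun k : ℕ => x ^ (2 * k) / (2 * k).factorial := by
  refine antitone_nat_of_succ_le fun k => ?_
  have hfac : (0 : ℝ) < (2 * k).factorial := by positivity
  have hratio : x ^ 2 / ((2 * k + 2) * (2 * k + 1)) ≤ 1 :=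
    div_le_one_of_le₀ (by nlinarith [k.cast_nonneg (α := ℝ)]) (by positivity)
  have hnonneg : 0 ≤ x ^ (2 * k) / (2 * k).factorial :=
    div_nonneg ((even_two_mul k).pow_nonneg x) hfac.le
  calc x ^ (2 * (k + 1)) / (2 * (k + 1)).factorial
      = x ^ 2 / ((2 * k + 2) * (2 * k + 1)) * (x ^ (2 * k) / (2 * k).factorial) := by
        rw [mul_add_one, Nat.factorial_succ, Nat.factorial_succ]
        push_cast
        field_simp
        ring
    _ ≤ x ^ (2 * k) / (2 * k).factorial := mul_le_of_le_one_left hnonneg hratio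

theorem tendsto_cos_alternating_series (x : ℝ) :
    Filter.Tendsto (fun n => ∑ k ∈ Finset.range n, (-1) ^ k * (x ^ (2 * k) / (2 * k).factorial))
      Filter.atTop (nhds (cos x)) := by
  simpa only [mul_div_assoc] using (hasSum_cos x).tendsto_sum_nat

theorem alternating_series_le_cos {x : ℝ} (hx : x ^ 2 ≤ 2) (n : ℕ) :
    ∑ k ∈ Finset.range (2 * n), (-1) ^ k * (x ^ (2 * k) / (2 * k).factorial) ≤ cos x :=
  (antitone_pow_div_factorial_of_sq_le_two hx).alternating_series_le_tendsto
    (tendsto_cos_alternating_series x) n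

theorem cos_le_alternating_series {x : ℝ} (hx : x ^ 2 ≤ 2) (n : ℕ) :
    cos x ≤ ∑ k ∈ Finset.range (2 * n + 1), (-1) ^ k * (x ^ (2 * k) / (2 * k).factorial) :=
  (antitone_pow_div_factorial_of_sq_le_two hx).tendsto_le_alternating_series
    (tendsto_cos_alternating_series x) n

theorem le_arccos_of_le_cos {x θ : ℝ} (hθ : θ ∈ Icc 0 π) (h : x ≤ cos θ) : θ ≤ arccos x :=
  arccos_cos hθ.1 hθ.2 ▸ arccos_le_arccos h

theorem arccos_le_of_cos_le {x θ : ℝ} (hθ : θ ∈ Icc 0 π) (h : cos θ ≤ x) : arccos x ≤ θ :=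
  arccos_cos hθ.1 hθ.2 ▸ arccos_le_arccos h

theorem sin_sq_eq_of_add_add_eq_pi {α β γ : ℝ} (h : α + β + γ = π) :
    sin α ^ 2 = sin β ^ 2 + sin γ ^ 2 - 2 * sin β * sin γ * cos α := by
  have hα : α = π - (β + γ) := by linarith
  rw [hα, sin_pi_sub, cos_pi_sub, sin_add, cos_add]
  linear_combination sin β ^ 2 * sin_sq_add_cos_sq γ + sin γ ^ 2 * sin_sq_add_cos_sq β

theorem cos_pi_div_pos {n : ℕ} (hn : 3 ≤ n) : 0 < cos (π / n) := by
  have hn' : (3 : ℝ) ≤ n := by exact_mod_cast hn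
  have hlt : π / n < π / 2 := by gcongr; linarith
  exact cos_pos_of_mem_Ioo ⟨by linarith [pi_pos, show 0 ≤ π / n by positivity], hlt⟩

theorem half_mem_Icc {n : ℕ} {a : ℝ} (ha : a ∈ Icc 0 (2 * π / n)) : a / 2 ∈ Icc 0 (π / n) :=
  ⟨by linarith [ha.1], by linarith [ha.2, mul_div_assoc 2 π (n : ℝ)]⟩

theorem pi_div_natCast_le_pi (n : ℕ) : π / n ≤ π := by
  rcases n.eq_zero_or_pos with rfl | hn
  · simpa using pi_pos.le
  · exact div_le_self pi_pos.le (by exact_mod_cast hn)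

theorem cos_pi_div_le_cos_half {n : ℕ} {a : ℝ} (ha : a ∈ Icc 0 (2 * π / n)) :
    cos (π / n) ≤ cos (a / 2) :=
  cos_le_cos_of_nonneg_of_le_pi (half_mem_Icc ha).1 (pi_div_natCast_le_pi n) (half_mem_Icc ha).2

theorem cos_half_pos {n : ℕ} {a : ℝ} (hn : 3 ≤ n) (ha : a ∈ Icc 0 (2 * π / n)) :
    0 < cos (a / 2) :=
  (cos_pi_div_pos hn).trans_le (cos_pi_div_le_cos_half ha)

theorem cos_pi_div_div_cos_half_mem_Icc {n : ℕ} {a : ℝ} (hn : 3 ≤ n)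
    (ha : a ∈ Icc 0 (2 * π / n)) : cos (π / n) / cos (a / 2) ∈ Icc 0 1 :=
  ⟨div_nonneg (cos_pi_div_pos hn).le (cos_half_pos hn ha).le,
    div_le_one_of_le₀ (cos_pi_div_le_cos_half ha) (cos_half_pos hn ha).le⟩

theorem beta_div_two (n : ℕ) (a : ℝ) : beta n a / 2 = arcsin (cos (π / n) / cos (a / 2)) :=
  mul_div_cancel_left₀ _ two_ne_zero

theorem sin_beta_div_two {n : ℕ} {a : ℝ} (hn : 3 ≤ n) (ha : a ∈ Icc 0 (2 * π / n)) :
    sin (beta n a / 2) = cos (π / n) / cos (a / 2) := by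
  obtain ⟨h0, h1⟩ := cos_pi_div_div_cos_half_mem_Icc hn ha
  rw [beta_div_two, sin_arcsin (by linarith) h1]

theorem beta_div_two_mem_Icc {n : ℕ} {a : ℝ} (hn : 3 ≤ n) (ha : a ∈ Icc 0 (2 * π / n)) :
    beta n a / 2 ∈ Icc 0 π := by
  rw [beta_div_two]
  exact ⟨arcsin_nonneg.2 (cos_pi_div_div_cos_half_mem_Icc hn ha).1,
    (arcsin_le_pi_div_two _).trans (by linarith [pi_pos])⟩

theorem strictMonoOn_beta {n : ℕ} (hn : 3 ≤ n) : StrictMonoOn (beta n) (Icc 0 (2 * π / n)) := by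
  intro a ha b hb hab
  have hcos : cos (b / 2) < cos (a / 2) :=
    cos_lt_cos_of_nonneg_of_le_pi (half_mem_Icc ha).1
      ((half_mem_Icc hb).2.trans (pi_div_natCast_le_pi n)) (by linarith)
  have hdiv : cos (π / n) / cos (a / 2) < cos (π / n) / cos (b / 2) :=
    div_lt_div_of_pos_left (cos_pi_div_pos hn) (cos_half_pos hn hb) hcos
  have hlower := (cos_pi_div_div_cos_half_mem_Icc hn ha).1
  have hupper := (cos_pi_div_div_cos_half_mem_Icc hn hb).2
  exact mul_lt_mul_of_pos_left (arcsin_lt_arcsin (by linarith) hdiv hupper) two_pos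

theorem K_eq_sub_sum_beta (p : List ℕ) (a : ℝ) :
    K p a = 2 * π - (p.map fun n => beta n a).sum := by
  -- `K` coerces the whole list to `List ℝ` before mapping, so `rfl` does not apply.
  simp only [K, beta, bind_pure_comp, List.map_eq_map, List.map_map, Function.comp_def]

theorem Icc_two_pi_div_subset {n N : ℕ} (hn : 0 < n) (hnN : n ≤ N) :
    Icc 0 (2 * π / N) ⊆ Icc 0 (2 * π / (n : ℝ)) := by
  have hn' : (0 : ℝ) < n := by exact_mod_cast hn
  have hnN' : (n : ℝ) ≤ N := by exact_mod_cast hnN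
  exact Icc_subset_Icc_right (div_le_div_of_nonneg_left two_pi_pos.le hn' hnN')

theorem strictAntiOn_K {p : List ℕ} {N : ℕ} (hp : p ≠ []) (hbound : ∀ n ∈ p, 3 ≤ n ∧ n ≤ N) :
    StrictAntiOn (K p) (Icc 0 (2 * π / N)) := by
  intro a ha b hb hab
  have hbeta : ∀ n ∈ p, beta n a < beta n b := fun n hn =>
    have hsub := Icc_two_pi_div_subset (by linarith [(hbound n hn).1]) (hbound n hn).2
    strictMonoOn_beta (hbound n hn).1 (hsub ha) (hsub hb) hab
  simp only [K_eq_sub_sum_beta]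
  exact sub_lt_sub_left (List.sum_lt_sum_of_ne_nil hp _ _ hbeta) _

theorem eq_ac_of_K_eq_zero {p : List ℕ} {a : ℝ}
    (hbound : ∀ n ∈ p, 3 ≤ n ∧ n ≤ p.getLast!) (ha : a ∈ Icc 0 (2 * π / (p.getLast! : ℝ)))
    (hK : K p a = 0) : a = ac p := by
  have hp : p ≠ [] := by
    rintro rfl
    simp [K_eq_sub_sum_beta, pi_ne_zero] at hK
  have hgreatest : IsGreatest {b | b ∈ Icc 0 (2 * π / (p.getLast! : ℝ)) ∧ 0 ≤ K p b} a :=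
    ⟨⟨ha, hK.ge⟩, fun b hb =>
      ((strictAntiOn_K hp hbound).le_iff_ge ha hb.1).1 (hK.trans_le hb.2)⟩
  exact hgreatest.csSup_eq.symm

/-- The angle opposite the side of length `cos (π / p)` in the Euclidean triangle with side lengths
`cos (π / p)`, `cos (π / q)` and `cos (π / r)`, given by the law of cosines. It is half the interior
angle of the `p`-gon at the critical side-length of the pattern `(p, q, r)`. -/
noncomputable def criticalHalfAngle (p q r : ℕ) : ℝ :=
  arccos ((cos (π / q) ^ 2 + cos (π / r) ^ 2 - cos (π / p) ^ 2) / (2 * cos (π / q) * cos (π / r)))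

theorem beta_eq_two_mul_criticalHalfAngle {p q r : ℕ} {a : ℝ} (hp : 3 ≤ p) (hq : 3 ≤ q)
    (hr : 3 ≤ r) (hap : a ∈ Icc 0 (2 * π / p)) (haq : a ∈ Icc 0 (2 * π / q))
    (har : a ∈ Icc 0 (2 * π / r)) (hsum : beta p a + beta q a + beta r a = 2 * π) :
    beta p a = 2 * criticalHalfAngle p q r := by
  have hq0 := cos_pi_div_pos hq
  have hr0 := cos_pi_div_pos hr
  have hC := cos_half_pos hp hap
  have hlaw := sin_sq_eq_of_add_add_eq_pi
    (show beta p a / 2 + beta q a / 2 + beta r a / 2 = π by linarith)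
  rw [sin_beta_div_two hp hap, sin_beta_div_two hq haq, sin_beta_div_two hr har] at hlaw
  have hcos : cos (beta p a / 2) = (cos (π / q) ^ 2 + cos (π / r) ^ 2 - cos (π / p) ^ 2) /
      (2 * cos (π / q) * cos (π / r)) := by
    rw [eq_div_iff (by positivity)]
    field_simp at hlaw
    linarith
  obtain ⟨h0, hπ⟩ := beta_div_two_mem_Icc hp hap
  rw [criticalHalfAngle, ← hcos, arccos_cos h0 hπ]
  ring

theorem sum_face_area_eq {p q r : ℕ} {a : ℝ} (hp : 3 ≤ p) (hq : 3 ≤ q) (hpr : p ≤ r) (hqr : q ≤ r)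
    (ha : a ∈ Icc 0 (2 * π / r)) (hK : K [p, q, r] a = 0) :
    (p * beta p a - (p - 2) * π) + (q * beta q a - (q - 2) * π) + (r * beta r a - (r - 2) * π) =
      (6 + r - p - q) * π - 2 * (r - p) * criticalHalfAngle p q r
        - 2 * (r - q) * criticalHalfAngle q p r := by
  have hr : 3 ≤ r := hp.trans hpr
  have hap := Icc_two_pi_div_subset (by linarith) hpr ha
  have haq := Icc_two_pi_div_subset (by linarith) hqr ha
  have hsum : beta p a + beta q a + beta r a = 2 * π := by
    simp only [K_eq_sub_sum_beta, List.map_cons, List.map_nil, List.sum_cons, List.sum_nil] at hK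
    linarith
  have hbetap := beta_eq_two_mul_criticalHalfAngle hp hq hr hap haq ha hsum
  have hbetaq := beta_eq_two_mul_criticalHalfAngle hq hp hr haq hap ha (by linarith)
  linear_combination r * hsum - (r - p) * hbetap - (r - q) * hbetaq

theorem cos_pi_div_mem_Icc {n : ℕ} {l u : ℝ} (hn : 3 ≤ n) (hl : 0 ≤ l) (hlπ : l ≤ π) (hπu : π ≤ u)
    (hu : u ≤ 4) (k : ℕ) :
    cos (π / n) ∈ Icc
      (∑ i ∈ Finset.range (2 * k), (-1) ^ i * ((u / n) ^ (2 * i) / (2 * i).factorial))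
      (∑ i ∈ Finset.range (2 * k + 1), (-1) ^ i * ((l / n) ^ (2 * i) / (2 * i).factorial)) := by
  have hn' : (3 : ℝ) ≤ n := by exact_mod_cast hn
  have hln : 0 ≤ l / n := by positivity
  have hlu : l / n ≤ π / n ∧ π / n ≤ u / n := ⟨by gcongr, by gcongr⟩
  have hun : u / n ≤ 4 / 3 := by gcongr
  constructor
  · exact (alternating_series_le_cos (by nlinarith) k).trans
      (cos_le_cos_of_nonneg_of_le_pi (by linarith) (by linarith [pi_gt_three]) hlu.2)
  · exact (cos_le_cos_of_nonneg_of_le_pi hln (pi_div_natCast_le_pi n) hlu.1).trans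
      (cos_le_alternating_series (by nlinarith) k)

theorem cos_pi_div_eleven_mem_Icc : cos (π / 11) ∈ Icc 0.95949297 0.95949298 := by
  obtain ⟨hl, hu⟩ := cos_pi_div_mem_Icc (n := 11) (l := 3.1415926535) (u := 3.1415926536)
    (by norm_num) (by norm_num) (by linarith [pi_gt_d20]) (by linarith [pi_lt_d20]) (by norm_num) 3
  rw [Nat.cast_ofNat] at hl hu
  refine ⟨le_trans ?_ hl, hu.trans ?_⟩ <;> norm_num [Finset.sum_range_succ, Nat.factorial]

theorem cos_pi_div_thirteen_mem_Icc : cos (π / 13) ∈ Icc 0.97094181 0.97094182 := by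
  obtain ⟨hl, hu⟩ := cos_pi_div_mem_Icc (n := 13) (l := 3.1415926535) (u := 3.1415926536)
    (by norm_num) (by norm_num) (by linarith [pi_gt_d20]) (by linarith [pi_lt_d20]) (by norm_num) 3
  rw [Nat.cast_ofNat] at hl hu
  refine ⟨le_trans ?_ hl, hu.trans ?_⟩ <;> norm_num [Finset.sum_range_succ, Nat.factorial]

theorem criticalHalfAngle_three_eleven_thirteen_mem_Icc :
    criticalHalfAngle 3 11 13 ∈ Icc 0.5238608 0.523861 := by
  obtain ⟨hc₁, hc₂⟩ := cos_pi_div_eleven_mem_Icc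
  obtain ⟨hd₁, hd₂⟩ := cos_pi_div_thirteen_mem_Icc
  have hpi := pi_gt_three
  simp only [criticalHalfAngle, Nat.cast_ofNat, cos_pi_div_three]
  constructor
  · refine le_arccos_of_le_cos ⟨by norm_num, by linarith⟩ ?_
    calc (cos (π / 11) ^ 2 + cos (π / 13) ^ 2 - (1 / 2) ^ 2) / (2 * cos (π / 11) * cos (π / 13))
        ≤ (0.95949298 ^ 2 + 0.97094182 ^ 2 - (1 / 2) ^ 2) / (2 * 0.95949297 * 0.97094181) := by
          gcongr
      _ ≤ _ := by norm_num [Finset.sum_range_succ, Nat.factorial]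
      _ ≤ cos 0.5238608 := alternating_series_le_cos (by norm_num) 3
  · refine arccos_le_of_cos_le ⟨by norm_num, by linarith⟩ ?_
    calc cos 0.523861 ≤ _ := cos_le_alternating_series (by norm_num) 3
      _ ≤ (0.95949297 ^ 2 + 0.97094181 ^ 2 - (1 / 2) ^ 2) / (2 * 0.95949298 * 0.97094182) := by
          norm_num [Finset.sum_range_succ, Nat.factorial]
      _ ≤ _ := by gcongr; nlinarith

theorem criticalHalfAngle_eleven_three_thirteen_mem_Icc :
    criticalHalfAngle 11 3 13 ∈ Icc 1.286747 1.286748 := by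
  obtain ⟨hc₁, hc₂⟩ := cos_pi_div_eleven_mem_Icc
  obtain ⟨hd₁, hd₂⟩ := cos_pi_div_thirteen_mem_Icc
  have hpi := pi_gt_three
  simp only [criticalHalfAngle, Nat.cast_ofNat, cos_pi_div_three]
  constructor
  · refine le_arccos_of_le_cos ⟨by norm_num, by linarith⟩ ?_
    calc ((1 / 2) ^ 2 + cos (π / 13) ^ 2 - cos (π / 11) ^ 2) / (2 * (1 / 2) * cos (π / 13))
        ≤ ((1 / 2) ^ 2 + 0.97094182 ^ 2 - 0.95949297 ^ 2) / (2 * (1 / 2) * 0.97094181) := by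
          gcongr
      _ ≤ _ := by norm_num [Finset.sum_range_succ, Nat.factorial]
      _ ≤ cos 1.286747 := alternating_series_le_cos (by norm_num) 4
  · refine arccos_le_of_cos_le ⟨by norm_num, by linarith⟩ ?_
    calc cos 1.286748 ≤ _ := cos_le_alternating_series (by norm_num) 3
      _ ≤ ((1 / 2) ^ 2 + 0.97094181 ^ 2 - 0.95949298 ^ 2) / (2 * (1 / 2) * 0.97094182) := by
          norm_num [Finset.sum_range_succ, Nat.factorial]
      _ ≤ _ := by gcongr; nlinarith

end

/-- Let a₀ be the unique solution in (0, 2π/13] of K_a((3,11,13)) = 0, i.e.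
a₀ = a_c((3,11,13)).  Then the total area of the three faces of a vertex of pattern
(3,11,13) at side length a₀ satisfies
0.08375 < (3β(3,a₀) − π) + (11β(11,a₀) − 9π) + (13β(13,a₀) − 11π) < 0.08376. -/
theorem stmt18 (a0 : ℝ)
    (ha0 : a0 ∈ Set.Ioc (0:ℝ) (2 * Real.pi / 13)) (hK : K [3, 11, 13] a0 = 0) :
    a0 = ac [3, 11, 13] ∧
    8375 / 100000 <
      (3 * beta 3 a0 - Real.pi) + (11 * beta 11 a0 - 9 * Real.pi) +
        (13 * beta 13 a0 - 11 * Real.pi) ∧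
    (3 * beta 3 a0 - Real.pi) + (11 * beta 11 a0 - 9 * Real.pi) +
        (13 * beta 13 a0 - 11 * Real.pi) < 8376 / 100000 := by
  have ha13 : a0 ∈ Set.Icc 0 (2 * Real.pi / (13 : ℕ)) := ⟨ha0.1.le, by exact_mod_cast ha0.2⟩
  have harea := sum_face_area_eq (by norm_num) (by norm_num) (by norm_num) (by norm_num) ha13 hK
  push_cast at harea
  obtain ⟨hl3, hu3⟩ := criticalHalfAngle_three_eleven_thirteen_mem_Icc
  obtain ⟨hl11, hu11⟩ := criticalHalfAngle_eleven_three_thirteen_mem_Icc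
  have hπl := Real.pi_gt_d20
  have hπu := Real.pi_lt_d20
  exact ⟨eq_ac_of_K_eq_zero (by simp) ha13 hK, by linarith, by linarith⟩
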